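/- Let $\mu > 0$ and let $Y$ be a Poisson random variable with mean $\mu$. If $k$ is a positive integer with $k \ge \mu$, then the tail conditional expectation satisfies $\mathbb{E}[Y \mid Y \ge k] \le k + \frac{\mu}{k + 1 - \mu}$. -/

import Mathlib

/-- The Poisson probability mass function: `P[Poi(μ) = i] = exp(-μ) μ^i / i!`. -/
noncomputable def poiPMF (μ : ℝ) (i : ℕ) : ℝ :=
  Real.exp (-μ) * μ ^ i / (Nat.factorial i : ℝ)

/-- The Poisson tail probability `P[Poi(μ) ≥ k]`. -/
noncomputable def poiTail (μ : ℝ) (k : ℕ) : ℝ :=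
  ∑' j : ℕ, poiPMF μ (k + j)

/-- The tail conditional expectation `E[Poi(μ) | Poi(μ) ≥ k]`,
i.e. `E[Y · 1_{Y ≥ k}] / P[Y ≥ k]`. -/
noncomputable def poiTCE (μ : ℝ) (k : ℕ) : ℝ :=
  (∑' j : ℕ, ((k + j : ℕ) : ℝ) * poiPMF μ (k + j)) / poiTail μ k

/-!
Beyond `k`, each Poisson weight is at most `μ / (k + 1)` times the previous one, so the overshoot
`Y - k` given `Y ≥ k` has mean at most that of a geometric variable with this ratio `r`, which is
`r / (1 - r) = μ / (k + 1 - μ)`.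
-/

lemma tsum_nat_mul_le_of_succ_le_mul {a : ℕ → ℝ} {r : ℝ} (hr : r < 1)
    (ha : Summable a) (hna : Summable fun n : ℕ ↦ n * a n) (hratio : ∀ n, a (n + 1) ≤ r * a n) :
    ∑' n : ℕ, n * a n ≤ r / (1 - r) * ∑' n, a n := by
  have self_bound : ∑' n : ℕ, n * a n ≤ r * (∑' n : ℕ, n * a n + ∑' n, a n) := calc
    ∑' n : ℕ, n * a n = ∑' n : ℕ, ((n + 1 : ℕ) : ℝ) * a (n + 1) := by
      simp [hna.tsum_eq_zero_add]
    _ ≤ ∑' n : ℕ, r * (n * a n + a n) := by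
      refine ((summable_nat_add_iff 1).2 hna).tsum_le_tsum (fun n ↦ ?_) ((hna.add ha).mul_left r)
      calc ((n + 1 : ℕ) : ℝ) * a (n + 1) ≤ ((n + 1 : ℕ) : ℝ) * (r * a n) := by
            gcongr
            exact hratio n
        _ = r * (n * a n + a n) := by push_cast; ring
    _ = r * (∑' n : ℕ, n * a n + ∑' n, a n) := by rw [tsum_mul_left, hna.tsum_add ha]
  rw [div_mul_eq_mul_div, le_div_iff₀ (sub_pos.2 hr)]
  linarith

lemma poiPMF_nonneg {μ : ℝ} (hμ : 0 ≤ μ) (n : ℕ) : 0 ≤ poiPMF μ n := by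
  unfold poiPMF
  positivity

lemma poiPMF_pos {μ : ℝ} (hμ : 0 < μ) (n : ℕ) : 0 < poiPMF μ n := by
  unfold poiPMF
  positivity

lemma succ_mul_poiPMF_succ (μ : ℝ) (n : ℕ) :
    ((n + 1 : ℕ) : ℝ) * poiPMF μ (n + 1) = μ * poiPMF μ n := by
  simp only [poiPMF, Nat.factorial_succ, Nat.cast_mul]
  field_simp
  ring

lemma poiPMF_add_succ_le {μ : ℝ} (hμ : 0 ≤ μ) (k j : ℕ) :
    poiPMF μ (k + (j + 1)) ≤ μ / (k + 1) * poiPMF μ (k + j) := by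
  rw [div_mul_eq_mul_div, le_div_iff₀' (by positivity), ← succ_mul_poiPMF_succ, ← add_assoc]
  gcongr
  · exact poiPMF_nonneg hμ _
  · push_cast
    linarith [j.cast_nonneg (α := ℝ)]

lemma summable_poiPMF (μ : ℝ) : Summable (poiPMF μ) :=
  ((Real.summable_pow_div_factorial μ).mul_left (Real.exp (-μ))).congr fun n ↦ by
    rw [poiPMF, mul_div_assoc]

lemma summable_nat_mul_poiPMF (μ : ℝ) : Summable fun n : ℕ ↦ n * poiPMF μ n := by
  rw [← summable_nat_add_iff 1]
  simpa only [succ_mul_poiPMF_succ] using (summable_poiPMF μ).mul_left μ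

lemma summable_poiPMF_add (μ : ℝ) (k : ℕ) : Summable fun j ↦ poiPMF μ (k + j) :=
  (summable_poiPMF μ).comp_injective (add_right_injective k)

lemma summable_nat_mul_poiPMF_add (μ : ℝ) (k : ℕ) :
    Summable fun j : ℕ ↦ j * poiPMF μ (k + j) := by
  have hshift : Summable fun j ↦ ((k + j : ℕ) : ℝ) * poiPMF μ (k + j) :=
    (summable_nat_mul_poiPMF μ).comp_injective (add_right_injective k)
  refine (hshift.sub ((summable_poiPMF_add μ k).mul_left (k : ℝ))).congr fun j ↦ ?_
  push_cast
  ring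

lemma poiTail_pos {μ : ℝ} (hμ : 0 < μ) (k : ℕ) : 0 < poiTail μ k :=
  (summable_poiPMF_add μ k).tsum_pos (fun _ ↦ poiPMF_nonneg hμ.le _) 0 (poiPMF_pos hμ _)

lemma poiTCE_eq_add_div {μ : ℝ} {k : ℕ} (htail : poiTail μ k ≠ 0) :
    poiTCE μ k = k + (∑' j : ℕ, j * poiPMF μ (k + j)) / poiTail μ k := by
  have hsplit : ∑' j : ℕ, ((k + j : ℕ) : ℝ) * poiPMF μ (k + j)
      = k * poiTail μ k + ∑' j : ℕ, j * poiPMF μ (k + j) := by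
    simp only [Nat.cast_add, add_mul]
    rw [((summable_poiPMF_add μ k).mul_left _).tsum_add (summable_nat_mul_poiPMF_add μ k),
      tsum_mul_left, poiTail]
  rw [poiTCE, hsplit, add_div, mul_div_cancel_right₀ _ htail]

theorem poisson_tail_conditional_expectation_upper_bound_general
    {μ : ℝ} {k : ℕ} (hμ : 0 < μ) (hkμ : μ < k + 1) :
    poiTCE μ k ≤ (k : ℝ) + μ / ((k : ℝ) + 1 - μ) := by
  have hratio : μ / (k + 1) < 1 := (div_lt_one (by positivity)).2 hkμ
  have hgeom : μ / (k + 1) / (1 - μ / (k + 1)) = μ / (k + 1 - μ) := by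
    rw [one_sub_div (by positivity), div_div_div_cancel_right₀ (by positivity)]
  rw [poiTCE_eq_add_div (poiTail_pos hμ k).ne']
  refine add_le_add_right ?_ _
  rw [div_le_iff₀ (poiTail_pos hμ k), ← hgeom]
  exact tsum_nat_mul_le_of_succ_le_mul hratio (summable_poiPMF_add μ k)
    (summable_nat_mul_poiPMF_add μ k) (poiPMF_add_succ_le hμ.le k)

theorem poisson_tail_conditional_expectation_upper_bound
    (μ : ℝ) (k : ℕ) (hμ : 0 < μ) (hk : 0 < k) (hkμ : μ ≤ k) :
    poiTCE μ k ≤ (k : ℝ) + μ / ((k : ℝ) + 1 - μ) :=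
  poisson_tail_conditional_expectation_upper_bound_general hμ (hkμ.trans_lt (lt_add_one _))
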